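/- Let T = A_1 × ⋯ × A_k be a full factorial design and S ⊆ T a simple fraction of strength t. Suppose K ⊆ {1,…,k} with |K| = t + 1 and there is a block B of the partition 𝒞_K with S not independent of B (|S ∩ B|·|T| ≠ |S|·|B|). Then for every decomposition K = I ∪ J with I, J nonempty and disjoint, there exist u ∈ U_I and v ∈ U_J with ∑_{s ∈ S} u(s)·v(s) ≠ 0; hence Û_I and Û_J are not orthogonal, i.e., U_I and U_J are aliased in S. -/

import Mathlib

/-- The block of the partition `𝒞_I` of the full factorial design `T = ∏ i, A i`
determined by the values `r i` for `i ∈ I`:  `{x ∈ T : x i = r i for all i ∈ I}`. -/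
def block {k : ℕ} (A : Fin k → Type) [∀ i, Fintype (A i)] [∀ i, DecidableEq (A i)]
    (I : Finset (Fin k)) (r : ∀ i, A i) : Finset (∀ i, A i) :=
  Finset.univ.filter fun x => ∀ i ∈ I, x i = r i

/-- The partition `𝒞_I` of the full factorial design, viewed as the set of its blocks. -/
def CI {k : ℕ} (A : Fin k → Type) [∀ i, Fintype (A i)] [∀ i, DecidableEq (A i)]
    (I : Finset (Fin k)) : Set (Finset (∀ i, A i)) :=
  {B | ∃ r : ∀ i, A i, B = block A I r}

/-- Independence of two subsets of a finite set `T`:  `|A ∩ B| · |T| = |A| · |B|`. -/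
def indep {T : Type} [Fintype T] [DecidableEq T] (B C : Finset T) : Prop :=
  (B ∩ C).card * Fintype.card T = B.card * C.card

/-- A simple fraction `S ⊆ T` has strength `t ≥ 1` if `S` is independent of every block of
the partition `𝒞_I`, for every `I ⊆ {1,…,k}` with `|I| = t`. -/
def hasStrength {k : ℕ} (A : Fin k → Type) [∀ i, Fintype (A i)] [∀ i, DecidableEq (A i)]
    (S : Finset (∀ i, A i)) (t : ℕ) : Prop :=
  ∀ I : Finset (Fin k), I.card = t → ∀ B ∈ CI A I, indep S B

/-- The interaction subspace `U_I ⊆ ℝ^T`, defined inductively: `U_∅` is the space of constant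
functions, and for `I ≠ ∅`, `U_I` consists of the contrast functions in `U_{𝒞_I}` (functions
constant on each block of `𝒞_I` whose values sum to zero) that are orthogonal to `U_J` for
every `J ⊊ I`. -/
def UI {k : ℕ} (A : Fin k → Type) [∀ i, Fintype (A i)] [∀ i, DecidableEq (A i)] :
    Finset (Fin k) → Set ((∀ i, A i) → ℝ)
  | I =>
    if I = ∅ then {u | ∃ c : ℝ, u = fun _ => c}
    else
      {u | (∀ B ∈ CI A I, ∀ x ∈ B, ∀ y ∈ B, u x = u y) ∧ (∑ x, u x = 0) ∧
        ∀ J : Finset (Fin k), J ⊂ I → ∀ v ∈ UI A J, ∑ x, u x * v x = 0}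
  termination_by I => I.card
  decreasing_by exact Finset.card_lt_card (by assumption)

section helpers

variable {k : ℕ} (A : Fin k → Type) [∀ i, Fintype (A i)] [∀ i, DecidableEq (A i)]

/-- The centred indicator of `x i = r i`. -/
noncomputable def ctr (r : ∀ i, A i) (i : Fin k) (x : ∀ i, A i) : ℝ :=
  (if x i = r i then 1 else 0) + (-(1 / (Fintype.card (A i) : ℝ)))

theorem sum_update (i : Fin k) (F : (∀ i, A i) → ℝ) :
    ∑ x, ∑ a : A i, F (Function.update x i a) = (Fintype.card (A i) : ℝ) * ∑ x, F x := by
  have h1 : ∑ p : (∀ i, A i) × A i, F (Function.update p.1 i p.2)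
      = ∑ p : (∀ i, A i) × A i, F p.1 := by
    refine Finset.sum_nbij' (fun p => (Function.update p.1 i p.2, p.1 i))
      (fun p => (Function.update p.1 i p.2, p.1 i)) ?_ ?_ ?_ ?_ ?_ <;> simp
  rw [Fintype.sum_prod_type, Fintype.sum_prod_type] at h1
  rw [h1]
  simp [Finset.mul_sum]

theorem sum_ctr_mul [∀ i, Nonempty (A i)] (r : ∀ i, A i) (i : Fin k) (g : (∀ i, A i) → ℝ)
    (hg : ∀ x a, g (Function.update x i a) = g x) : ∑ x, ctr A r i x * g x = 0 := by
  have h := sum_update A i (fun x => ctr A r i x * g x)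
  have hc : (Fintype.card (A i) : ℝ) ≠ 0 := by
    exact_mod_cast Fintype.card_ne_zero
  have h0 : ∑ x, ∑ a : A i, ctr A r i (Function.update x i a) * g (Function.update x i a) = 0 := by
    refine Finset.sum_eq_zero fun x _ => ?_
    simp only [hg]
    rw [← Finset.sum_mul]
    simp only [ctr, Function.update_self, Finset.sum_add_distrib]
    simp [hc]
  rw [h0] at h
  rcases mul_eq_zero.1 h.symm with h | h
  · exact absurd h hc
  · exact h

/-- `f` depends only on the coordinates in `I`. -/
def depOn (I : Finset (Fin k)) (f : (∀ i, A i) → ℝ) : Prop :=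
  ∀ x y : ∀ i, A i, (∀ i ∈ I, x i = y i) → f x = f y

theorem depOn_prod_ctr (r : ∀ i, A i) (I : Finset (Fin k)) :
    depOn A I (fun x => ∏ i ∈ I, ctr A r i x) := by
  intro x y h
  refine Finset.prod_congr rfl fun i hi => ?_
  simp only [ctr, h i hi]

theorem sum_prod_ctr_mul [∀ i, Nonempty (A i)] (r : ∀ i, A i) (I J : Finset (Fin k))
    (hJ : ¬ I ⊆ J) (g : (∀ i, A i) → ℝ) (hg : depOn A J g) :
    ∑ x, (∏ i ∈ I, ctr A r i x) * g x = 0 := by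
  obtain ⟨i, hi, hiJ⟩ := Finset.not_subset.1 hJ
  have := sum_ctr_mul A r i (fun x => (∏ j ∈ I.erase i, ctr A r j x) * g x) (by
    intro x a
    congr 1
    · refine Finset.prod_congr rfl fun j hj => ?_
      simp only [ctr, Function.update_of_ne (Finset.ne_of_mem_erase hj)]
    · refine hg _ _ fun j hj => ?_
      exact Function.update_of_ne (by rintro rfl; exact hiJ hj) _ _)
  rw [← this]
  refine Finset.sum_congr rfl fun x _ => ?_
  rw [← mul_assoc, Finset.mul_prod_erase I (fun j => ctr A r j x) hi]

theorem depOn_of_mem_UI (J : Finset (Fin k)) (v : (∀ i, A i) → ℝ) (hv : v ∈ UI A J) :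
    depOn A J v := by
  rw [UI] at hv
  split_ifs at hv with h
  · obtain ⟨c, rfl⟩ := hv
    intro x y _
    rfl
  · intro x y hxy
    exact hv.1 _ ⟨y, rfl⟩ x (by simpa [block] using hxy) y (by simp [block])

theorem prod_ctr_mem [∀ i, Nonempty (A i)] (r : ∀ i, A i) (I : Finset (Fin k))
    (hI : I.Nonempty) : (fun x => ∏ i ∈ I, ctr A r i x) ∈ UI A I := by
  rw [UI, if_neg hI.ne_empty]
  refine ⟨?_, ?_, ?_⟩
  · rintro B ⟨q, rfl⟩ x hx y hy
    simp only [block, Finset.mem_filter, Finset.mem_univ, true_and] at hx hy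
    exact depOn_prod_ctr A r I x y fun i hi => (hx i hi).trans (hy i hi).symm
  · have := sum_prod_ctr_mul A r I ∅ (by simpa using hI.ne_empty) (fun _ => 1)
      (fun _ _ _ => rfl)
    simpa using this
  · intro J hJ v hv
    exact sum_prod_ctr_mul A r I J hJ.2 v (depOn_of_mem_UI A J v hv)

/-- The defect functional. -/
noncomputable def defect (S : Finset (∀ i, A i)) (f : (∀ i, A i) → ℝ) : ℝ :=
  (Fintype.card (∀ i, A i) : ℝ) * ∑ x ∈ S, f x - (S.card : ℝ) * ∑ x, f x

theorem defect_sum (S : Finset (∀ i, A i)) {ι : Type} (s : Finset ι)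
    (f : ι → (∀ i, A i) → ℝ) :
    defect A S (fun x => ∑ j ∈ s, f j x) = ∑ j ∈ s, defect A S (f j) := by
  simp only [defect, Finset.sum_sub_distrib, ← Finset.mul_sum]
  rw [Finset.sum_comm, Finset.sum_comm (s := Finset.univ)]

theorem defect_mul_const (S : Finset (∀ i, A i)) (f : (∀ i, A i) → ℝ) (c : ℝ) :
    defect A S (fun x => f x * c) = defect A S f * c := by
  simp only [defect, ← Finset.sum_mul]
  ring

theorem defect_block (S C : Finset (∀ i, A i)) :
    defect A S (fun x => if x ∈ C then 1 else 0) = 0 ↔ indep S C := by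
  unfold defect indep
  rw [sub_eq_zero, Finset.sum_boole, Finset.sum_boole, Finset.filter_mem_eq_inter,
    Finset.filter_mem_eq_inter, Finset.univ_inter, mul_comm]
  exact_mod_cast Iff.rfl

theorem defect_depOn (S : Finset (∀ i, A i)) (L : Finset (Fin k))
    (hL : ∀ r, indep S (block A L r)) (f : (∀ i, A i) → ℝ) (hf : depOn A L f) :
    defect A S f = 0 := by
  have key : f = fun x => ∑ r, (if x ∈ block A L r then (1 : ℝ) else 0)
      * (f r / (block A L r).card) := by
    funext x
    have h1 : ∀ r, (if x ∈ block A L r then (1 : ℝ) else 0) * (f r / (block A L r).card)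
        = if r ∈ block A L x then f x / (block A L x).card else 0 := by
      intro r
      have e : x ∈ block A L r ↔ r ∈ block A L x := by
        simp only [block, Finset.mem_filter, Finset.mem_univ, true_and]
        exact forall₂_congr fun _ _ => eq_comm
      by_cases h : x ∈ block A L r
      · have h' := h
        simp only [block, Finset.mem_filter, Finset.mem_univ, true_and] at h'
        have hb : block A L r = block A L x := by
          ext y
          simp only [block, Finset.mem_filter, Finset.mem_univ, true_and]
          exact forall₂_congr fun i hi => by rw [h' i hi]
        rw [if_pos h, if_pos (e.1 h), hb, hf x r h', one_mul]
      · rw [if_neg h, if_neg (fun h2 => h (e.2 h2)), zero_mul]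
    simp only [h1]
    rw [Finset.sum_ite_mem, Finset.univ_inter, Finset.sum_const, nsmul_eq_mul]
    have hne : ((block A L x).card : ℝ) ≠ 0 := by
      have : x ∈ block A L x := by simp [block]
      exact_mod_cast Finset.card_ne_zero_of_mem this
    field_simp
  rw [key, defect_sum]
  refine Finset.sum_eq_zero fun r _ => ?_
  rw [defect_mul_const, (defect_block A S _).2 (hL r), zero_mul]

end helpers

/-- Let `S` be a simple fraction of strength `t`, `K ⊆ {1,…,k}` with `|K| = t + 1`, and `B`
a block of `𝒞_K` with `S` not independent of `B`. Then for every decomposition `K = I ∪ J`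
with `I, J` nonempty and disjoint, there are `u ∈ U_I` and `v ∈ U_J` with
`∑_{s ∈ S} u(s)·v(s) ≠ 0`; hence `Û_I` and `Û_J` are not orthogonal, i.e. `U_I` and `U_J`
are aliased in `S`. -/
theorem aliased_of_not_indep {k : ℕ} (hk : 1 ≤ k) (A : Fin k → Type)
    [∀ i, Fintype (A i)] [∀ i, DecidableEq (A i)] [∀ i, Nonempty (A i)]
    (S : Finset (∀ i, A i)) (t : ℕ) (ht : 1 ≤ t) (hS : hasStrength A S t)
    (K : Finset (Fin k)) (hK : K.card = t + 1)
    (B : Finset (∀ i, A i)) (hB : B ∈ CI A K) (hSB : ¬ indep S B) :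
    ∀ I J : Finset (Fin k), I.Nonempty → J.Nonempty → Disjoint I J → I ∪ J = K →
      ∃ u ∈ UI A I, ∃ v ∈ UI A J, ∑ s ∈ S, u s * v s ≠ 0 := by
  intro I J hI hJ hd hIJ
  obtain ⟨r, rfl⟩ := hB
  refine ⟨_, prod_ctr_mem A r I hI, _, prod_ctr_mem A r J hJ, ?_⟩
  simp only [← Finset.prod_union hd, hIJ]
  intro h0
  have hKne : K.Nonempty := Finset.card_pos.1 (by omega)
  have hT : ∑ x, ∏ i ∈ K, ctr A r i x = 0 := by
    have := sum_prod_ctr_mul A r K ∅ (by simpa using hKne.ne_empty) (fun _ => 1)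
      (fun _ _ _ => rfl)
    simpa using this
  have hD : defect A S (fun x => ∏ i ∈ K, ctr A r i x) = 0 := by
    simp [defect, h0, hT]
  have hE : (fun x => ∏ i ∈ K, ctr A r i x) = fun x => ∑ L ∈ K.powerset,
      (∏ i ∈ L, if x i = r i then (1 : ℝ) else 0) *
        ∏ i ∈ K \ L, (-(1 / (Fintype.card (A i) : ℝ))) := by
    funext x
    simp only [ctr]
    rw [Finset.prod_add]
  rw [hE, defect_sum, Finset.sum_eq_single K] at hD
  · apply hSB
    rw [← defect_block]
    refine Eq.trans ?_ hD
    congr 1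
    funext x
    simp [block, Finset.prod_ite_zero]
  · intro L hL hne
    rw [defect_mul_const]
    have hss : L ⊂ K := lt_of_le_of_ne (Finset.mem_powerset.1 hL) hne
    have hlt := Finset.card_lt_card hss
    obtain ⟨M, hLM, -, hM⟩ := Finset.exists_subsuperset_card_eq hss.1
      (show L.card ≤ t by omega) (show t ≤ K.card by omega)
    rw [defect_depOn A S M (fun q => hS M hM _ ⟨q, rfl⟩), zero_mul]
    intro x y hxy
    exact Finset.prod_congr rfl fun i hi => by rw [hxy i (hLM hi)]
  · intro h
    exact absurd (Finset.mem_powerset_self K) h
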